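/- arXiv:2108.01355 — 2 statements merged into one kernel-verified Lean document; each statement's English description precedes it below -/
import Mathlib

section
/- For every integer n ≥ 1 and every integer k ≥ 2 there exists a divisor d of n such that d ≤ n^{1/k} and τ(n) ≤ 2^k · τ(d)^k, where τ is the number-of-divisors function. -/
/-!
Weight each prime `p ∣ n` by its multiplicity `v` in `n`. Dividing `n` by `p` lowers `log τ(n)` by
`log ((v + 1) / v)` and `log n` by `log p`; the weighted total of the former is at most `log τ(n)`
by Bernoulli's inequality, that of the latter is exactly `log n`. Hence for some `p` the ratio
`log τ / log` does not drop in passing from `n` to `n / p`. Iterating gives a chain of divisors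
from `n` down to `1`, all satisfying `d ^ c ≤ τ(d)` where `n ^ c = τ(n)`. Each step at most halves
`τ`, so the first `d` of the chain with `d ≤ x` satisfies `x ^ c ≤ 2 τ(d)`; take `x = n ^ (1 / k)`.
-/

lemma natCast_mul_log_add_one_sub_log_le (v : ℕ) :
    (v : ℝ) * (Real.log (v + 1) - Real.log v) ≤ Real.log (v + 1) := by
  rcases v.eq_zero_or_pos with rfl | hv
  · simp
  have hv' : (0 : ℝ) < v := Nat.cast_pos.mpr hv
  have bernoulli : ((v : ℝ) + 1)⁻¹ ≤ (v / (v + 1)) ^ v := by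
    calc ((v : ℝ) + 1)⁻¹ = 1 + v * -((v : ℝ) + 1)⁻¹ := by field_simp; ring
      _ ≤ (1 + -((v : ℝ) + 1)⁻¹) ^ v :=
        one_add_mul_le_pow (by linarith [inv_le_one_of_one_le₀ (by linarith : (1 : ℝ) ≤ v + 1)]) v
      _ = (v / (v + 1)) ^ v := by congr 1; field_simp; ring
  have h := Real.log_le_log (by positivity) bernoulli
  rw [Real.log_inv, Real.log_pow, Real.log_div hv'.ne' (by positivity)] at h
  linarith

lemma card_divisors_prime_mul_mul_factorization {p : ℕ} (hp : p.Prime) (m : ℕ) :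
    (p * m).divisors.card * (p * m).factorization p =
      m.divisors.card * ((p * m).factorization p + 1) := by
  rcases eq_or_ne m 0 with rfl | hm
  · simp
  obtain ⟨a, r, hpr, rfl⟩ := Nat.exists_eq_pow_mul_and_not_dvd hm p hp.ne_one
  have hr : r ≠ 0 := right_ne_zero_of_mul hm
  have card_divisors (b : ℕ) : (p ^ b * r).divisors.card = (b + 1) * r.divisors.card := by
    rw [((hp.coprime_iff_not_dvd.mpr hpr).pow_left b).card_divisors_mul,
      Nat.divisors_prime_pow hp, Finset.card_map, Finset.card_range]
  have factorization_eq : (p ^ (a + 1) * r).factorization p = a + 1 := by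
    simp [Nat.factorization_mul (pow_ne_zero _ hp.ne_zero) hr, hp.factorization_self,
      Nat.factorization_eq_zero_of_not_dvd hpr]
  rw [← mul_assoc, ← pow_succ', factorization_eq, card_divisors, card_divisors]
  ring

lemma card_divisors_mul_le (m n : ℕ) :
    (m * n).divisors.card ≤ m.divisors.card * n.divisors.card := by
  rw [Nat.divisors_mul]
  exact Finset.card_mul_le

lemma card_divisors_prime_mul_le {p : ℕ} (hp : p.Prime) (m : ℕ) :
    (p * m).divisors.card ≤ 2 * m.divisors.card := by
  simpa only [hp.divisors, Finset.card_pair hp.one_lt.ne] using card_divisors_mul_le p m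

lemma sum_factorization_mul_log_add_one_sub_log_le {n : ℕ} (hn : n ≠ 0) :
    ∑ p ∈ n.primeFactors, (n.factorization p : ℝ) *
        (Real.log (n.factorization p + 1) - Real.log (n.factorization p)) ≤
      Real.log n.divisors.card := by
  rw [Nat.card_divisors hn, Nat.cast_prod, Real.log_prod (fun p _ ↦ by positivity)]
  push_cast
  exact Finset.sum_le_sum fun p _ ↦ natCast_mul_log_add_one_sub_log_le _

lemma exists_prime_log_add_one_sub_log_mul_log_le {n : ℕ} (hn : 1 < n) :
    ∃ p ∈ n.primeFactors,
      (Real.log (n.factorization p + 1) - Real.log (n.factorization p)) * Real.log n ≤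
        Real.log p * Real.log n.divisors.card := by
  have hlog : 0 ≤ Real.log n := Real.log_natCast_nonneg n
  have weighted_sum_le :
      ∑ p ∈ n.primeFactors, (n.factorization p : ℝ) *
          ((Real.log (n.factorization p + 1) - Real.log (n.factorization p)) * Real.log n) ≤
        ∑ p ∈ n.primeFactors, (n.factorization p : ℝ) *
          (Real.log p * Real.log n.divisors.card) := by
    simp only [← mul_assoc, ← Finset.sum_mul]
    calc _ ≤ Real.log n.divisors.card * Real.log n :=
          mul_le_mul_of_nonneg_right (sum_factorization_mul_log_add_one_sub_log_le (by lia)) hlog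
      _ = _ := by
          rw [mul_comm, Real.log_nat_eq_sum_factorization, Finsupp.sum, Nat.support_factorization]
  obtain ⟨p, hp, hle⟩ :=
    Finset.exists_le_of_sum_le (Nat.nonempty_primeFactors.mpr hn) weighted_sum_le
  have hv : 0 < n.factorization p :=
    Nat.pos_of_ne_zero (Finsupp.mem_support_iff.mp (by rwa [Nat.support_factorization]))
  exact ⟨p, hp, le_of_mul_le_mul_left hle (Nat.cast_pos.mpr hv)⟩

lemma exists_prime_mul_eq_log_card_divisors_mul_log_le {n : ℕ} (hn : 1 < n) :
    ∃ p m : ℕ, p.Prime ∧ p * m = n ∧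
      Real.log n.divisors.card * Real.log m ≤ Real.log m.divisors.card * Real.log n := by
  obtain ⟨p, hpn, hle⟩ := exists_prime_log_add_one_sub_log_mul_log_le hn
  have hp := Nat.prime_of_mem_primeFactors hpn
  obtain ⟨m, rfl⟩ := Nat.dvd_of_mem_primeFactors hpn
  refine ⟨p, m, hp, rfl, ?_⟩
  have hpm : p * m ≠ 0 := by lia
  have hm : m ≠ 0 := right_ne_zero_of_mul hpm
  have hv : (p * m).factorization p ≠ 0 :=
    (hp.factorization_pos_of_dvd hpm (dvd_mul_right p m)).ne'
  have log_card :
      Real.log (p * m).divisors.card + Real.log ((p * m).factorization p) =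
        Real.log m.divisors.card + Real.log ((p * m).factorization p + 1) := by
    rw [← Real.log_mul (by simpa using ⟨hp.ne_zero, hm⟩) (by exact_mod_cast hv),
      ← Real.log_mul (by simpa using hm) (by positivity)]
    exact_mod_cast congrArg (fun t : ℕ ↦ Real.log t)
      (card_divisors_prime_mul_mul_factorization hp m)
  have log_mul : Real.log (p * m : ℕ) = Real.log p + Real.log m := by
    rw [Nat.cast_mul, Real.log_mul (by exact_mod_cast hp.ne_zero) (by exact_mod_cast hm)]
  linear_combination hle + Real.log (p * m : ℕ) * log_card -
    Real.log (p * m).divisors.card * log_mul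

lemma exists_prime_mul_eq_rpow_le_card_divisors {n : ℕ} {c : ℝ} (hn : 1 < n)
    (h : (n : ℝ) ^ c ≤ n.divisors.card) :
    ∃ p m : ℕ, p.Prime ∧ p * m = n ∧ (m : ℝ) ^ c ≤ m.divisors.card := by
  obtain ⟨p, m, hp, hpm, hle⟩ := exists_prime_mul_eq_log_card_divisors_mul_log_le hn
  refine ⟨p, m, hp, hpm, ?_⟩
  have rpow_le_iff {d : ℕ} (hd : d ≠ 0) :
      (d : ℝ) ^ c ≤ d.divisors.card ↔ c * Real.log d ≤ Real.log d.divisors.card :=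
    Real.rpow_le_iff_le_log (by positivity)
      (Nat.cast_pos.mpr (Finset.card_pos.mpr (Nat.nonempty_divisors.mpr hd)))
  rw [rpow_le_iff (by lia)] at h
  rw [rpow_le_iff (by rintro rfl; lia)]
  refine le_of_mul_le_mul_right ?_ (Real.log_pos (Nat.one_lt_cast.mpr hn))
  calc c * Real.log m * Real.log n = c * Real.log n * Real.log m := by ring
    _ ≤ Real.log n.divisors.card * Real.log m :=
      mul_le_mul_of_nonneg_right h (Real.log_natCast_nonneg m)
    _ ≤ Real.log m.divisors.card * Real.log n := hle

lemma exists_dvd_le_rpow_le_two_mul_card_divisors {n : ℕ} {c x : ℝ} (hc : 0 ≤ c) (hx : 1 ≤ x)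
    (hxn : x ≤ n) (h : (n : ℝ) ^ c ≤ n.divisors.card) :
    ∃ d : ℕ, d ∣ n ∧ (d : ℝ) ≤ x ∧ x ^ c ≤ 2 * d.divisors.card := by
  induction n using Nat.strong_induction_on with
  | _ n ih =>
    have hxc : x ^ c ≤ n.divisors.card :=
      (Real.rpow_le_rpow (by positivity) hxn hc).trans h
    rcases hxn.eq_or_lt with rfl | hlt
    · exact ⟨n, dvd_rfl, le_rfl, by linarith [Nat.cast_nonneg (α := ℝ) n.divisors.card]⟩
    have hn : 1 < n := by exact_mod_cast hx.trans_lt hlt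
    obtain ⟨p, m, hp, rfl, hm⟩ := exists_prime_mul_eq_rpow_le_card_divisors hn h
    rcases le_total (m : ℝ) x with hmx | hxm
    · exact ⟨m, dvd_mul_left m p, hmx,
        hxc.trans (by exact_mod_cast card_divisors_prime_mul_le hp m)⟩
    · have hmn : m < p * m := lt_mul_of_one_lt_left (by grind) hp.one_lt
      obtain ⟨d, hdm, hd⟩ := ih m hmn hxm hm
      exact ⟨d, hdm.mul_left p, hd⟩

lemma exists_rpow_eq_card_divisors {n : ℕ} (hn : n ≠ 0) :
    ∃ c : ℝ, 0 ≤ c ∧ (n : ℝ) ^ c = n.divisors.card := by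
  rcases eq_or_ne n 1 with rfl | hn1
  · exact ⟨0, by simp⟩
  have hn' : (1 : ℝ) < n := Nat.one_lt_cast.mpr (by lia)
  have hcard : 1 ≤ n.divisors.card := Finset.card_pos.mpr (Nat.nonempty_divisors.mpr hn)
  exact ⟨Real.logb n n.divisors.card, Real.logb_nonneg hn' (by exact_mod_cast hcard),
    Real.rpow_logb (by positivity) hn'.ne' (by exact_mod_cast hcard)⟩

theorem exists_small_divisor_tau_bound_general (n : ℕ) (k : ℝ) (hn : 1 ≤ n) (hk : 1 ≤ k) :
    ∃ d : ℕ, d ∣ n ∧ (d : ℝ) ≤ (n : ℝ) ^ (1 / k) ∧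
      (n.divisors.card : ℝ) ≤ 2 ^ k * (d.divisors.card : ℝ) ^ k := by
  have hn' : (1 : ℝ) ≤ n := Nat.one_le_cast.mpr hn
  have hk₀ : 0 < k := by linarith
  obtain ⟨c, hc, hcn⟩ := exists_rpow_eq_card_divisors (n := n) (by lia)
  obtain ⟨d, hdn, hdx, hle⟩ := exists_dvd_le_rpow_le_two_mul_card_divisors
    (x := (n : ℝ) ^ (1 / k)) hc (Real.one_le_rpow hn' (by positivity))
    (Real.rpow_le_self_of_one_le hn' ((div_le_one hk₀).mpr hk)) hcn.le
  refine ⟨d, hdn, hdx, ?_⟩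
  calc (n.divisors.card : ℝ) = (((n : ℝ) ^ (1 / k)) ^ c) ^ k := by
        rw [← hcn, ← Real.rpow_mul (by positivity), ← Real.rpow_mul (by positivity)]
        congr 1
        field_simp
    _ ≤ (2 * d.divisors.card) ^ k := Real.rpow_le_rpow (by positivity) hle hk₀.le
    _ = 2 ^ k * (d.divisors.card : ℝ) ^ k := Real.mul_rpow zero_le_two (by positivity)

/-- Lemma 2.2: for every `n ≥ 1` and `k ≥ 2` there is a divisor `d ∣ n` with `d ≤ n^{1/k}`
and `τ(n) ≤ 2^k τ(d)^k`. -/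
theorem exists_small_divisor_tau_bound (n k : ℕ) (hn : 1 ≤ n) (hk : 2 ≤ k) :
    ∃ d : ℕ, d ∣ n ∧ (d : ℝ) ≤ (n : ℝ) ^ ((1 : ℝ) / k) ∧
      n.divisors.card ≤ 2 ^ k * d.divisors.card ^ k := by
  exact_mod_cast exists_small_divisor_tau_bound_general n k hn (by exact_mod_cast (by lia : 1 ≤ k))
end

section
/- There is an absolute constant A such that for all real numbers 2 ≤ z ≤ y, the number of integers n with y < n ≤ 2y all of whose prime factors are < z is at most A · y · e^{-u/2}, where u := log y / log z. -/
open scoped BigOperators Classical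
open Finset

/-!
Rankin's trick with an extra logarithm. Put `β = 1 / (2 log z)`, so that `z ^ β = e ^ (1/2)` and
`y ^ β = e ^ (u/2)`. Each counted `n` satisfies `n ^ β log n ≥ y ^ β log y`, and writing
`log n = ∑ q ∣ n, Λ q`, `n = q m`, turns the sum of `n ^ β log n` over the smooth `n ≤ x` into
`∑ m, m ^ β ∑ q ≤ x / m, Λ q q ^ β`, with `m` and `q` smooth. Chebyshev's bounds make the inner
sum `O(x / m)`, and `∑ m, m ^ (β - 1)` is at most the Euler product of `(1 - p ^ (β - 1))⁻¹` over
`p < z`. Up to a constant factor, by Mertens' bound for `∑ p < z, log p / p`, this product is that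
of `(1 - p ^ (-s))⁻¹` at `s = 1 + 1 / log z`, which is at most `ζ(s) ≤ s / (s - 1) = 1 + log z`. As
`log z ≤ log y`, the factor `log y` gained on the left absorbs it.
-/

open Real (log exp)
open scoped ArithmeticFunction.vonMangoldt

lemma primesBelow_ceil_subset_primesLE_floor (z : ℝ) :
    ⌈z⌉₊.primesBelow ⊆ ⌊z⌋₊.primesLE := fun _ hp ↦
  Nat.mem_primesBelow.2 ((Nat.mem_primesBelow.1 hp).imp_left
    fun h ↦ h.trans_le (Nat.ceil_le_floor_add_one z))

lemma log_four_le_three : log 4 ≤ 3 :=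
  (Real.log_le_sub_one_of_pos (by norm_num)).trans (by norm_num)

lemma two_thirds_lt_log_of_two_le {z : ℝ} (hz : 2 ≤ z) : 2 / 3 < log z := by
  have := Real.log_two_gt_d9
  have := Real.log_le_log two_pos hz
  linarith

lemma rpow_one_div_two_mul_log {y : ℝ} (hy : 0 < y) (z : ℝ) :
    y ^ (1 / (2 * log z)) = exp (log y / log z / 2) := by
  rw [Real.rpow_def_of_pos hy]
  congr 1
  ring

lemma mem_smoothNumbers_ceil {z : ℝ} {n : ℕ} :
    n ∈ Nat.smoothNumbers ⌈z⌉₊ ↔ ∀ p : ℕ, p.Prime → p ∣ n → (p : ℝ) < z := by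
  simp only [Nat.mem_smoothNumbers', Nat.lt_ceil]

lemma sum_vonMangoldt_mul_div_le (n : ℕ) :
    ∑ k ∈ Ioc 0 n, Λ k * ((n / k : ℕ) : ℝ) ≤ n * log n := by
  rw [← ArithmeticFunction.sum_Ioc_mul_zeta_eq_sum, ArithmeticFunction.vonMangoldt_mul_zeta]
  calc ∑ k ∈ Ioc 0 n, log k
      ≤ ∑ _k ∈ Ioc 0 n, log n := by
        refine sum_le_sum fun k hk ↦ ?_
        obtain ⟨hk0, hkn⟩ := mem_Ioc.1 hk
        gcongr
    _ = n * log n := by simp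

lemma sum_primesLE_log_div_le (n : ℕ) : ∑ p ∈ n.primesLE, log p / p ≤ 2 * log n := by
  rcases n.eq_zero_or_pos with rfl | hn
  · simp
  have hterm : ∀ p ∈ n.primesLE, (n : ℝ) / 2 * (log p / p) ≤ Λ p * ((n / p : ℕ) : ℝ) := by
    intro p hp
    obtain ⟨hpn, hp⟩ := Nat.mem_primesLE.1 hp
    have hfloor : (n : ℝ) / p / 2 ≤ (n / p : ℕ) := by
      rw [← Nat.floor_div_eq_div (K := ℝ)]
      exact (Nat.div_two_lt_floor ((one_le_div (mod_cast hp.pos)).2 (mod_cast hpn))).le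
    rw [ArithmeticFunction.vonMangoldt_apply_prime hp]
    calc (n : ℝ) / 2 * (log p / p) = log p * (n / p / 2) := by ring
      _ ≤ log p * (n / p : ℕ) := by gcongr
  have hsub : n.primesLE ⊆ Ioc 0 n := fun p hp ↦
    mem_Ioc.2 ⟨(Nat.mem_primesLE.1 hp).2.pos, (Nat.mem_primesLE.1 hp).1⟩
  have hsum : (n : ℝ) / 2 * ∑ p ∈ n.primesLE, log p / p ≤ n / 2 * (2 * log n) :=
    calc (n : ℝ) / 2 * ∑ p ∈ n.primesLE, log p / p
        ≤ ∑ p ∈ n.primesLE, Λ p * ((n / p : ℕ) : ℝ) := by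
          rw [mul_sum]
          exact sum_le_sum hterm
      _ ≤ ∑ k ∈ Ioc 0 n, Λ k * ((n / k : ℕ) : ℝ) :=
          sum_le_sum_of_subset_of_nonneg hsub fun _ _ _ ↦
            mul_nonneg ArithmeticFunction.vonMangoldt_nonneg (Nat.cast_nonneg _)
      _ ≤ n * log n := sum_vonMangoldt_mul_div_le n
      _ = n / 2 * (2 * log n) := by ring
  exact le_of_mul_le_mul_left hsum (by positivity)

lemma sum_primesBelow_ceil_log_div_le {z : ℝ} (hz : 1 ≤ z) :
    ∑ p ∈ ⌈z⌉₊.primesBelow, log p / p ≤ 2 * log z := by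
  have hfloor : 0 < ⌊z⌋₊ := Nat.floor_pos.2 hz
  calc ∑ p ∈ ⌈z⌉₊.primesBelow, log p / p
      ≤ ∑ p ∈ ⌊z⌋₊.primesLE, log p / p :=
        sum_le_sum_of_subset_of_nonneg (primesBelow_ceil_subset_primesLE_floor z)
          fun p _ _ ↦ div_nonneg (Real.log_natCast_nonneg p) p.cast_nonneg
    _ ≤ 2 * log ⌊z⌋₊ := sum_primesLE_log_div_le _
    _ ≤ 2 * log z := by
        gcongr
        exact Nat.floor_le (by linarith)

lemma card_primesBelow_ceil_mul_log_le {z : ℝ} (hz : 1 < z) :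
    (#⌈z⌉₊.primesBelow : ℝ) * log z ≤ 8 * z := by
  have hlog : 0 < log z := Real.log_pos hz
  have hsqrt : √z * √z = z := Real.mul_self_sqrt (by linarith)
  have hlog_sqrt : log √z = log z / 2 := Real.log_sqrt (by linarith)
  have hlog_le : log z ≤ 2 * √z := by
    have := Real.log_le_sub_one_of_pos (Real.sqrt_pos.2 (by linarith : 0 < z))
    linarith
  have hcard : (#⌈z⌉₊.primesBelow : ℝ) ≤ log 4 * z / log √z + √z := by
    refine le_trans ?_ (Chebyshev.pi_le_log4_mul_div hz)
    rw [← Nat.primesLE_card_eq_primeCounting]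
    exact_mod_cast card_le_card (primesBelow_ceil_subset_primesLE_floor z)
  calc (#⌈z⌉₊.primesBelow : ℝ) * log z
      ≤ (log 4 * z / log √z + √z) * log z := by gcongr
    _ = 2 * log 4 * z + √z * log z := by
        rw [hlog_sqrt]
        field_simp
    _ ≤ 2 * 3 * z + √z * (2 * √z) := by
        gcongr
        exact log_four_le_three
    _ = 8 * z := by linarith

/-- The completely multiplicative function `n ↦ n ^ t`, in the bundled form in which Mathlib's Euler
product lemmas take their functions. -/
noncomputable def natRpowHom (t : ℝ) : ℕ →* ℝ where
  toFun n := (n : ℝ) ^ t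
  map_one' := by simp
  map_mul' a b := by
    rw [Nat.cast_mul, Real.mul_rpow a.cast_nonneg b.cast_nonneg]

@[simp]
lemma natRpowHom_apply (t : ℝ) (n : ℕ) : natRpowHom t n = (n : ℝ) ^ t := rfl

lemma tsum_nat_rpow_neg_le {s : ℝ} (hs : 1 < s) : ∑' n : ℕ, (n : ℝ) ^ (-s) ≤ s / (s - 1) := by
  have hs1 : s - 1 ≠ 0 := (sub_pos.2 hs).ne'
  have hsum : Summable fun n : ℕ ↦ (n : ℝ) ^ (-s) := Real.summable_nat_rpow.2 (by linarith)
  have hshift : ∑' n : ℕ, (n : ℝ) ^ (-s) = ∑' n : ℕ, 1 / (n + 1 : ℝ) ^ s := by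
    rw [hsum.tsum_eq_zero_add, Nat.cast_zero, Real.zero_rpow (by linarith), zero_add]
    refine tsum_congr fun n ↦ ?_
    rw [Real.rpow_neg (Nat.cast_nonneg _), one_div, Nat.cast_add_one]
  have hterm : 0 ≤ s * ZetaAsymptotics.termTSum s :=
    mul_nonneg (by linarith) (tsum_nonneg fun _ ↦ ZetaAsymptotics.term_nonneg _ _)
  calc ∑' n : ℕ, (n : ℝ) ^ (-s)
      ≤ 1 + 1 / (s - 1) := by
        rw [hshift]
        linarith [ZetaAsymptotics.zeta_limit_aux1 hs]
    _ = s / (s - 1) := by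
        field_simp
        ring

lemma prod_primesBelow_one_sub_rpow_neg_inv_le {s : ℝ} (hs : 1 < s) (N : ℕ) :
    ∏ p ∈ N.primesBelow, (1 - (p : ℝ) ^ (-s))⁻¹ ≤ s / (s - 1) := by
  have hsum : Summable fun n : ℕ ↦ (n : ℝ) ^ (-s) := Real.summable_nat_rpow.2 (by linarith)
  calc ∏ p ∈ N.primesBelow, (1 - (p : ℝ) ^ (-s))⁻¹
      = ∑' m : N.smoothNumbers, (m : ℝ) ^ (-s) :=
        EulerProduct.prod_primesBelow_geometric_eq_tsum_smoothNumbers (f := natRpowHom (-s)) hsum N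
    _ ≤ ∑' n : ℕ, (n : ℝ) ^ (-s) :=
        hsum.tsum_subtype_le _ N.smoothNumbers fun n ↦ by positivity
    _ ≤ s / (s - 1) := tsum_nat_rpow_neg_le hs

lemma sum_smoothNumbersUpTo_rpow_le_prod {t : ℝ} (ht : t < 0) (x N : ℕ) :
    ∑ m ∈ Nat.smoothNumbersUpTo x N, (m : ℝ) ^ t ≤ ∏ p ∈ N.primesBelow, (1 - (p : ℝ) ^ t)⁻¹ := by
  have hnorm {p : ℕ} (hp : p.Prime) : ‖natRpowHom t p‖ < 1 := by
    rw [natRpowHom_apply, Real.norm_of_nonneg (by positivity)]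
    exact Real.rpow_lt_one_of_one_lt_of_neg (mod_cast hp.one_lt) ht
  have hhasSum : HasSum (fun m : N.smoothNumbers ↦ (m : ℝ) ^ t)
      (∏ p ∈ N.primesBelow, (1 - (p : ℝ) ^ t)⁻¹) :=
    (EulerProduct.summable_and_hasSum_smoothNumbers_prod_primesBelow_geometric hnorm N).2
  rw [← sum_subtype_of_mem (fun m : ℕ ↦ (m : ℝ) ^ t) (p := (· ∈ N.smoothNumbers))
    fun m hm ↦ (Nat.mem_smoothNumbersUpTo.1 hm).2]
  exact sum_le_hasSum _ (fun m _ ↦ by positivity) hhasSum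

lemma inv_one_sub_le_mul_exp {a b : ℝ} (ha : a < 1) (hb : b < 1) :
    (1 - a)⁻¹ ≤ (1 - b)⁻¹ * exp ((a - b) / (1 - a)) := by
  have ha' : 0 < 1 - a := sub_pos.2 ha
  have hb' : 0 < 1 - b := sub_pos.2 hb
  calc (1 - a)⁻¹ = (1 - b)⁻¹ * ((a - b) / (1 - a) + 1) := by
        field_simp
        ring
    _ ≤ (1 - b)⁻¹ * exp ((a - b) / (1 - a)) := by
        gcongr
        exact Real.add_one_le_exp _

lemma rpow_sub_rpow_le_mul_log {x : ℝ} (hx : 0 < x) (a b : ℝ) :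
    x ^ a - x ^ b ≤ x ^ a * ((a - b) * log x) := by
  have hexp : x ^ b = x ^ a * exp (-((a - b) * log x)) := by
    rw [Real.rpow_def_of_pos hx, Real.rpow_def_of_pos hx, ← Real.exp_add]
    congr 1
    ring
  calc x ^ a - x ^ b = x ^ a * (1 - exp (-((a - b) * log x))) := by rw [hexp]; ring
    _ ≤ x ^ a * ((a - b) * log x) := by
        gcongr
        linarith [Real.one_sub_le_exp_neg ((a - b) * log x)]

lemma rpow_sub_one_le_seven_eighths {x β : ℝ} (hx : 2 ≤ x) (hβ : β ≤ 3 / 4) :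
    x ^ (β - 1) ≤ 7 / 8 := by
  calc x ^ (β - 1) ≤ x ^ (-(4 : ℝ)⁻¹) :=
        Real.rpow_le_rpow_of_exponent_le (by linarith) (by linarith)
    _ ≤ 2 ^ (-(4 : ℝ)⁻¹) := Real.rpow_le_rpow_of_nonpos two_pos hx (by norm_num)
    _ ≤ 7 / 8 := by
        rw [Real.rpow_neg zero_le_two, inv_le_comm₀ (by positivity) (by norm_num),
          Real.le_rpow_inv_iff_of_pos (by norm_num) zero_le_two (by norm_num)]
        norm_num

lemma inv_one_sub_rpow_sub_one_le {x z β δ : ℝ} (hx : 2 ≤ x) (hxz : x ≤ z) (hβ0 : 0 ≤ β)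
    (hβ : β ≤ 3 / 4) (hδ : 0 ≤ δ) :
    (1 - x ^ (β - 1))⁻¹ ≤
      (1 - x ^ (-(1 + δ)))⁻¹ * exp (8 * (β + δ) * z ^ β * (log x / x)) := by
  have hx0 : 0 < x := by linarith
  have hlog : 0 ≤ log x := Real.log_nonneg (by linarith)
  set a := x ^ (β - 1) with ha
  set b := x ^ (-(1 + δ))
  have ha1 : a ≤ 7 / 8 := rpow_sub_one_le_seven_eighths hx hβ
  have hba : b ≤ a := Real.rpow_le_rpow_of_exponent_le (by linarith) (by linarith)
  have hb1 : 0 < 1 - b := by linarith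
  have hsub : a - b ≤ (β + δ) * z ^ β * (log x / x) :=
    calc a - b ≤ a * ((β - 1 - -(1 + δ)) * log x) := rpow_sub_rpow_le_mul_log hx0 _ _
      _ = (β + δ) * x ^ β * (log x / x) := by
          rw [ha, Real.rpow_sub_one hx0.ne']
          ring
      _ ≤ (β + δ) * z ^ β * (log x / x) := by gcongr
  have hdiv : (a - b) / (1 - a) ≤ 8 * (β + δ) * z ^ β * (log x / x) :=
    calc (a - b) / (1 - a) ≤ 8 * (a - b) := by
          rw [div_le_iff₀ (by linarith)]
          nlinarith
      _ ≤ 8 * ((β + δ) * z ^ β * (log x / x)) := by gcongr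
      _ = 8 * (β + δ) * z ^ β * (log x / x) := by ring
  calc (1 - a)⁻¹ ≤ (1 - b)⁻¹ * exp ((a - b) / (1 - a)) :=
        inv_one_sub_le_mul_exp (by linarith) (by linarith)
    _ ≤ (1 - b)⁻¹ * exp (8 * (β + δ) * z ^ β * (log x / x)) := by gcongr

lemma prod_primesBelow_one_sub_rpow_sub_one_inv_le {z β : ℝ} (hz : 1 < z) (hβ0 : 0 ≤ β)
    (hβ : β ≤ 3 / 4) :
    ∏ p ∈ ⌈z⌉₊.primesBelow, (1 - (p : ℝ) ^ (β - 1))⁻¹ ≤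
      (1 + log z) * exp (16 * z ^ β * (β * log z + 1)) := by
  have hlog : 0 < log z := Real.log_pos hz
  have hfactor_nonneg {t : ℝ} (ht : t < 0) : ∀ p ∈ ⌈z⌉₊.primesBelow, 0 ≤ (1 - (p : ℝ) ^ t)⁻¹ :=
    fun p hp ↦ inv_nonneg.2 (sub_nonneg.2 (Real.rpow_le_one_of_one_le_of_nonpos
      (mod_cast (Nat.mem_primesBelow.1 hp).2.one_le) ht.le))
  set δ := (log z)⁻¹ with hδ
  have hδ0 : 0 < δ := inv_pos.2 hlog
  have hfactor : ∀ p ∈ ⌈z⌉₊.primesBelow, (1 - (p : ℝ) ^ (β - 1))⁻¹ ≤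
      (1 - (p : ℝ) ^ (-(1 + δ)))⁻¹ * exp (8 * (β + δ) * z ^ β * (log p / p)) := by
    intro p hp
    obtain ⟨hpz, hp⟩ := Nat.mem_primesBelow.1 hp
    exact inv_one_sub_rpow_sub_one_le (mod_cast hp.two_le) (Nat.lt_ceil.1 hpz).le hβ0 hβ hδ0.le
  have hzeta : ∏ p ∈ ⌈z⌉₊.primesBelow, (1 - (p : ℝ) ^ (-(1 + δ)))⁻¹ ≤ 1 + log z :=
    (prod_primesBelow_one_sub_rpow_neg_inv_le (by linarith) _).trans_eq (by
      rw [hδ]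
      field_simp
      ring)
  have hmertens : ∑ p ∈ ⌈z⌉₊.primesBelow, 8 * (β + δ) * z ^ β * (log p / p) ≤
      16 * z ^ β * (β * log z + 1) :=
    calc ∑ p ∈ ⌈z⌉₊.primesBelow, 8 * (β + δ) * z ^ β * (log p / p)
        ≤ 8 * (β + δ) * z ^ β * (2 * log z) := by
          rw [← mul_sum]
          gcongr
          exact sum_primesBelow_ceil_log_div_le hz.le
      _ = 16 * z ^ β * (β * log z + 1) := by
          rw [hδ]
          field_simp
          ring
  refine (prod_le_prod (hfactor_nonneg (by linarith)) hfactor).trans ?_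
  rw [prod_mul_distrib, ← Real.exp_sum]
  gcongr

lemma dvd_prod_primesBelow_pow_log {x N q : ℕ} (hq : q ∈ Nat.smoothNumbersUpTo x N)
    (hpow : IsPrimePow q) : q ∣ ∏ p ∈ N.primesBelow, p ^ p.log x := by
  obtain ⟨hqx, hqN⟩ := Nat.mem_smoothNumbersUpTo.1 hq
  obtain ⟨p, k, hp, hk, rfl⟩ := (isPrimePow_nat_iff q).1 hpow
  have hpN : p < N := Nat.mem_smoothNumbers'.1 hqN p hp (dvd_pow_self p hk.ne')
  exact (pow_dvd_pow p (Nat.le_log_of_pow_le hp.one_lt hqx)).trans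
    (dvd_prod_of_mem (fun p ↦ p ^ p.log x) (Nat.mem_primesBelow.2 ⟨hpN, hp⟩))

lemma log_prod_primesBelow_pow_log_le (x N : ℕ) :
    log (∏ p ∈ N.primesBelow, p ^ p.log x : ℕ) ≤ #N.primesBelow * log x := by
  rcases x.eq_zero_or_pos with rfl | hx
  · simp
  have hpos : ∀ p ∈ N.primesBelow, 0 < p ^ p.log x := fun p hp ↦
    pow_pos (Nat.mem_primesBelow.1 hp).2.pos _
  rw [Nat.cast_prod, Real.log_prod fun p hp ↦ by exact_mod_cast (hpos p hp).ne', ← nsmul_eq_mul]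
  refine sum_le_card_nsmul _ _ _ fun p hp ↦ Real.log_le_log (mod_cast hpos p hp) ?_
  exact_mod_cast Nat.pow_log_le_self p hx.ne'

lemma sum_smoothNumbersUpTo_vonMangoldt_le_card_mul_log (x N : ℕ) :
    ∑ q ∈ Nat.smoothNumbersUpTo x N, Λ q ≤ #N.primesBelow * log x := by
  set L := ∏ p ∈ N.primesBelow, p ^ p.log x
  have hL0 : L ≠ 0 := prod_ne_zero_iff.2 fun p hp ↦
    pow_ne_zero _ (Nat.mem_primesBelow.1 hp).2.ne_zero
  calc ∑ q ∈ Nat.smoothNumbersUpTo x N, Λ q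
      = ∑ q ∈ Nat.smoothNumbersUpTo x N with IsPrimePow q, Λ q :=
        (sum_filter_of_ne fun _ _ h ↦ ArithmeticFunction.vonMangoldt_ne_zero_iff.1 h).symm
    _ ≤ ∑ d ∈ L.divisors, Λ d := by
        refine sum_le_sum_of_subset_of_nonneg (fun q hq ↦ ?_)
          fun _ _ _ ↦ ArithmeticFunction.vonMangoldt_nonneg
        obtain ⟨hq, hpow⟩ := mem_filter.1 hq
        exact Nat.mem_divisors.2 ⟨dvd_prod_primesBelow_pow_log hq hpow, hL0⟩
    _ = log L := ArithmeticFunction.vonMangoldt_sum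
    _ ≤ #N.primesBelow * log x := log_prod_primesBelow_pow_log_le x N

lemma sum_smoothNumbersUpTo_vonMangoldt_le_psi (x N : ℕ) :
    ∑ q ∈ Nat.smoothNumbersUpTo x N, Λ q ≤ Chebyshev.psi x := by
  refine sum_le_sum_of_subset_of_nonneg (fun q hq ↦ ?_)
    fun _ _ _ ↦ ArithmeticFunction.vonMangoldt_nonneg
  obtain ⟨hqx, hqN⟩ := Nat.mem_smoothNumbersUpTo.1 hq
  rw [Nat.floor_natCast]
  exact mem_Ioc.2 ⟨Nat.pos_of_ne_zero (Nat.ne_zero_of_mem_smoothNumbers hqN), hqx⟩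

lemma log_le_mul_log_mul_div_rpow {z t σ : ℝ} (hz : 2 ≤ z) (hzt : z ≤ t) (hσ : 1 / 4 ≤ σ) :
    log t ≤ 9 * log z * (t / z) ^ σ := by
  have hz0 : 0 < z := by linarith
  have hlogz : 2 / 3 < log z := two_thirds_lt_log_of_two_le hz
  set s := t / z with hs
  have hs1 : 1 ≤ s := (one_le_div hz0).2 hzt
  have hlogs : log s ≤ 4 * s ^ σ :=
    calc log s ≤ s ^ (1 / 4 : ℝ) / (1 / 4) := Real.log_le_rpow_div (by linarith) (by norm_num)
      _ = 4 * s ^ (1 / 4 : ℝ) := by ring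
      _ ≤ 4 * s ^ σ := by gcongr
  have hone : 1 ≤ s ^ σ := Real.one_le_rpow hs1 (by linarith)
  have ht : log t = log z + log s := by
    rw [← Real.log_mul hz0.ne' (by linarith), hs, mul_div_cancel₀ _ hz0.ne']
  nlinarith

lemma sum_smoothNumbersUpTo_vonMangoldt_mul_rpow_le {z β : ℝ} (hz : 2 ≤ z) (hβ0 : 0 ≤ β)
    (hβ : β ≤ 3 / 4) (x : ℕ) :
    ∑ q ∈ Nat.smoothNumbersUpTo x ⌈z⌉₊, Λ q * (q : ℝ) ^ β ≤ 72 * z ^ β * x := by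
  have hz0 : 0 < z := by linarith
  have hpull : ∑ q ∈ Nat.smoothNumbersUpTo x ⌈z⌉₊, Λ q * (q : ℝ) ^ β ≤
      (∑ q ∈ Nat.smoothNumbersUpTo x ⌈z⌉₊, Λ q) * (x : ℝ) ^ β := by
    rw [sum_mul]
    refine sum_le_sum fun q hq ↦ mul_le_mul_of_nonneg_left ?_ ArithmeticFunction.vonMangoldt_nonneg
    have := (Nat.mem_smoothNumbersUpTo.1 hq).1
    gcongr
  refine hpull.trans ?_
  -- Below `z` Chebyshev's `ψ x = O(x)` suffices; above `z` it is too weak because of the factor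
  -- `x ^ β`, and the sparsity of the prime powers built from the `O(z / log z)` primes below `z`
  -- wins.
  rcases le_total (x : ℝ) z with hxz | hzx
  · calc (∑ q ∈ Nat.smoothNumbersUpTo x ⌈z⌉₊, Λ q) * (x : ℝ) ^ β
        ≤ (7 * x) * z ^ β := by
          gcongr
          refine (sum_smoothNumbersUpTo_vonMangoldt_le_psi x _).trans
            ((Chebyshev.psi_le_const_mul_self x.cast_nonneg).trans ?_)
          gcongr
          linarith [log_four_le_three]
      _ ≤ 72 * z ^ β * x := by nlinarith [show 0 ≤ z ^ β * x by positivity]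
  · have hx0 : (0 : ℝ) < x := hz0.trans_le hzx
    calc (∑ q ∈ Nat.smoothNumbersUpTo x ⌈z⌉₊, Λ q) * (x : ℝ) ^ β
        ≤ (#⌈z⌉₊.primesBelow * (9 * log z * (x / z) ^ (1 - β))) * (x : ℝ) ^ β := by
          gcongr
          refine (sum_smoothNumbersUpTo_vonMangoldt_le_card_mul_log x _).trans ?_
          gcongr
          exact log_le_mul_log_mul_div_rpow (σ := 1 - β) hz hzx (by linarith)
      _ = 9 * (#⌈z⌉₊.primesBelow * log z) * ((x / z) ^ (1 - β) * (x : ℝ) ^ β) := by ring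
      _ ≤ 9 * (8 * z) * ((x / z) ^ (1 - β) * (x : ℝ) ^ β) := by
          gcongr ?_ * _
          exact mul_le_mul_of_nonneg_left
            (card_primesBelow_ceil_mul_log_le (by linarith)) (by norm_num)
      _ = 72 * z ^ β * x := by
          rw [Real.div_rpow hx0.le hz0.le, Real.rpow_sub hx0, Real.rpow_sub hz0, Real.rpow_one,
            Real.rpow_one]
          field_simp
          norm_num

lemma mul_mem_smoothNumbersUpTo_iff {x N m q : ℕ} :
    m * q ∈ Nat.smoothNumbersUpTo x N ↔
      m ∈ Nat.smoothNumbersUpTo x N ∧ q ∈ Nat.smoothNumbersUpTo (x / m) N := by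
  simp only [Nat.mem_smoothNumbersUpTo]
  constructor
  · rintro ⟨hx, hN⟩
    have hne := Nat.ne_zero_of_mem_smoothNumbers hN
    have hm : 0 < m := Nat.pos_of_ne_zero (left_ne_zero_of_mul hne)
    have hq : 0 < q := Nat.pos_of_ne_zero (right_ne_zero_of_mul hne)
    exact ⟨⟨(Nat.le_mul_of_pos_right m hq).trans hx,
        Nat.mem_smoothNumbers_of_dvd hN (dvd_mul_right m q)⟩,
      (Nat.le_div_iff_mul_le hm).2 (by rwa [mul_comm]),
      Nat.mem_smoothNumbers_of_dvd hN (dvd_mul_left q m)⟩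
  · rintro ⟨⟨-, hm⟩, hqx, hq⟩
    exact ⟨(Nat.mul_le_mul_left m hqx).trans (Nat.mul_div_le x m), Nat.mul_mem_smoothNumbers hm hq⟩

lemma sum_smoothNumbersUpTo_mul_log (f : ℕ →* ℝ) (x N : ℕ) :
    ∑ n ∈ Nat.smoothNumbersUpTo x N, f n * log n =
      ∑ m ∈ Nat.smoothNumbersUpTo x N, f m * ∑ q ∈ Nat.smoothNumbersUpTo (x / m) N, Λ q * f q := by
  have hlog (n : ℕ) : log n = ∑ d ∈ n.divisorsAntidiagonal, Λ d.2 := by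
    rw [Nat.sum_divisorsAntidiagonal' (f := fun _ q ↦ Λ q), ArithmeticFunction.vonMangoldt_sum]
  simp_rw [hlog, mul_sum]
  rw [sum_sigma', sum_sigma']
  refine sum_bij' (fun a _ ↦ ⟨a.2.1, a.2.2⟩) (fun b _ ↦ ⟨b.1 * b.2, b.1, b.2⟩) ?_ ?_ ?_ ?_ ?_ <;>
    simp only [Sigma.forall, Prod.forall, mem_sigma, Nat.mem_divisorsAntidiagonal]
  · rintro _ m q ⟨hn, rfl, -⟩
    exact mul_mem_smoothNumbersUpTo_iff.1 hn
  · intro m q h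
    have hmq := mul_mem_smoothNumbersUpTo_iff.2 h
    exact ⟨hmq, trivial, Nat.ne_zero_of_mem_smoothNumbers (Nat.mem_smoothNumbersUpTo.1 hmq).2⟩
  · rintro _ m q ⟨-, rfl, -⟩
    rfl
  · simp
  · rintro _ m q ⟨-, rfl, -⟩
    rw [map_mul]
    ring

lemma sum_smoothNumbersUpTo_rpow_mul_log_le {z β : ℝ} (hz : 2 ≤ z) (hβ0 : 0 ≤ β)
    (hβ : β ≤ 3 / 4) (x : ℕ) :
    ∑ n ∈ Nat.smoothNumbersUpTo x ⌈z⌉₊, (n : ℝ) ^ β * log n ≤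
      72 * z ^ β * x * ((1 + log z) * exp (16 * z ^ β * (β * log z + 1))) := by
  have hinner : ∀ m ∈ Nat.smoothNumbersUpTo x ⌈z⌉₊,
      (m : ℝ) ^ β * ∑ q ∈ Nat.smoothNumbersUpTo (x / m) ⌈z⌉₊, Λ q * (q : ℝ) ^ β ≤
        72 * z ^ β * x * (m : ℝ) ^ (β - 1) := by
    intro m hm
    have hm0 : (m : ℝ) ≠ 0 := Nat.cast_ne_zero.2
      (Nat.ne_zero_of_mem_smoothNumbers (Nat.mem_smoothNumbersUpTo.1 hm).2)
    calc (m : ℝ) ^ β * ∑ q ∈ Nat.smoothNumbersUpTo (x / m) ⌈z⌉₊, Λ q * (q : ℝ) ^ β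
        ≤ (m : ℝ) ^ β * (72 * z ^ β * (x / m : ℕ)) := by
          gcongr
          exact sum_smoothNumbersUpTo_vonMangoldt_mul_rpow_le hz hβ0 hβ _
      _ ≤ (m : ℝ) ^ β * (72 * z ^ β * (x / m)) := by
          gcongr
          exact Nat.cast_div_le
      _ = 72 * z ^ β * x * (m : ℝ) ^ (β - 1) := by
          rw [Real.rpow_sub_one hm0]
          ring
  calc ∑ n ∈ Nat.smoothNumbersUpTo x ⌈z⌉₊, (n : ℝ) ^ β * log n
      = ∑ m ∈ Nat.smoothNumbersUpTo x ⌈z⌉₊,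
          (m : ℝ) ^ β * ∑ q ∈ Nat.smoothNumbersUpTo (x / m) ⌈z⌉₊, Λ q * (q : ℝ) ^ β :=
        sum_smoothNumbersUpTo_mul_log (natRpowHom β) x _
    _ ≤ 72 * z ^ β * x * ∑ m ∈ Nat.smoothNumbersUpTo x ⌈z⌉₊, (m : ℝ) ^ (β - 1) := by
        rw [mul_sum]
        exact sum_le_sum hinner
    _ ≤ 72 * z ^ β * x * ((1 + log z) * exp (16 * z ^ β * (β * log z + 1))) := by
        gcongr
        exact (sum_smoothNumbersUpTo_rpow_le_prod (by linarith) x _).trans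
          (prod_primesBelow_one_sub_rpow_sub_one_inv_le (by linarith) hβ0 hβ)

lemma card_mul_rpow_mul_log_le_sum_smoothNumbersUpTo {y β : ℝ} (hy : 1 ≤ y) (hβ : 0 ≤ β) {x N : ℕ}
    {S : Finset ℕ} (hS : S ⊆ Nat.smoothNumbersUpTo x N) (hyS : ∀ n ∈ S, y ≤ n) :
    #S * (y ^ β * log y) ≤ ∑ n ∈ Nat.smoothNumbersUpTo x N, (n : ℝ) ^ β * log n :=
  calc #S * (y ^ β * log y) ≤ ∑ n ∈ S, (n : ℝ) ^ β * log n := by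
        rw [← nsmul_eq_mul]
        refine card_nsmul_le_sum _ _ _ fun n hn ↦ ?_
        have := hyS n hn
        have := Real.log_nonneg hy
        gcongr
    _ ≤ ∑ n ∈ Nat.smoothNumbersUpTo x N, (n : ℝ) ^ β * log n :=
        sum_le_sum_of_subset_of_nonneg hS fun n _ _ ↦
          mul_nonneg (by positivity) (Real.log_natCast_nonneg n)

lemma card_mul_exp_le_of_subset_smoothNumbersUpTo {y z : ℝ} (hz : 2 ≤ z) (hzy : z ≤ y) {x : ℕ}
    {S : Finset ℕ} (hS : S ⊆ Nat.smoothNumbersUpTo x ⌈z⌉₊) (hyS : ∀ n ∈ S, y ≤ n) :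
    #S * exp (log y / log z / 2) ≤ 216 * exp (1 / 2) * exp (24 * exp (1 / 2)) * x := by
  have hlogz : 2 / 3 < log z := two_thirds_lt_log_of_two_le hz
  have hlogzy : log z ≤ log y := Real.log_le_log (by linarith) hzy
  have hlogy : 0 < log y := by linarith
  set β := 1 / (2 * log z) with hβ
  have hβ0 : 0 ≤ β := by positivity
  have hβ_le : β ≤ 3 / 4 := by
    rw [hβ, div_le_iff₀ (by positivity)]
    linarith
  have hβz : β * log z = 1 / 2 := by
    rw [hβ]
    field_simp
  have hz_rpow : z ^ β = exp (1 / 2) := by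
    rw [rpow_one_div_two_mul_log (by linarith), div_self (by linarith)]
  have hy_rpow : y ^ β = exp (log y / log z / 2) := rpow_one_div_two_mul_log (by linarith) z
  refine le_of_mul_le_mul_right ?_ hlogy
  calc #S * exp (log y / log z / 2) * log y = #S * (y ^ β * log y) := by rw [hy_rpow, mul_assoc]
    _ ≤ 72 * z ^ β * x * ((1 + log z) * exp (16 * z ^ β * (β * log z + 1))) :=
        (card_mul_rpow_mul_log_le_sum_smoothNumbersUpTo (by linarith) hβ0 hS hyS).trans
          (sum_smoothNumbersUpTo_rpow_mul_log_le hz hβ0 hβ_le x)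
    _ = 72 * exp (1 / 2) * x * ((1 + log z) * exp (24 * exp (1 / 2))) := by
        rw [hz_rpow, hβz]
        ring_nf
    _ ≤ 72 * exp (1 / 2) * x * ((3 * log y) * exp (24 * exp (1 / 2))) := by
        gcongr
        linarith
    _ = 216 * exp (1 / 2) * exp (24 * exp (1 / 2)) * x * log y := by ring

/-- Lemma 2.4 (smooth numbers bound): there is an absolute constant `A` such that for all
`2 ≤ z ≤ y`, `#{n : y < n ≤ 2y, P⁺(n) < z} ≤ A y e^{-u/2}` with `u = log y / log z`. -/
theorem smooth_numbers_upper_bound :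
    ∃ A : ℝ, ∀ y z : ℝ, 2 ≤ z → z ≤ y →
      (((Finset.range (⌊2 * y⌋₊ + 1)).filter
          (fun n : ℕ => y < n ∧ (n : ℝ) ≤ 2 * y ∧
            ∀ p : ℕ, p.Prime → p ∣ n → (p : ℝ) < z)).card : ℝ) ≤
        A * y * Real.exp (-(Real.log y / Real.log z) / 2) := by
  refine ⟨432 * exp (1 / 2) * exp (24 * exp (1 / 2)), fun y z hz hzy ↦ ?_⟩
  set S := (Finset.range (⌊2 * y⌋₊ + 1)).filter (fun n : ℕ => y < n ∧ (n : ℝ) ≤ 2 * y ∧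
    ∀ p : ℕ, p.Prime → p ∣ n → (p : ℝ) < z)
  have hS : S ⊆ Nat.smoothNumbersUpTo ⌊2 * y⌋₊ ⌈z⌉₊ := fun n hn ↦ by
    obtain ⟨-, -, hny, hnz⟩ := mem_filter.1 hn
    exact Nat.mem_smoothNumbersUpTo.2 ⟨Nat.le_floor hny, mem_smoothNumbers_ceil.2 hnz⟩
  have hyS : ∀ n ∈ S, y ≤ n := fun n hn ↦ (mem_filter.1 hn).2.1.le
  rw [neg_div, Real.exp_neg, ← div_eq_mul_inv, le_div_iff₀ (Real.exp_pos _)]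
  calc #S * exp (log y / log z / 2)
      ≤ 216 * exp (1 / 2) * exp (24 * exp (1 / 2)) * ⌊2 * y⌋₊ :=
        card_mul_exp_le_of_subset_smoothNumbersUpTo hz hzy hS hyS
    _ ≤ 216 * exp (1 / 2) * exp (24 * exp (1 / 2)) * (2 * y) := by
        gcongr
        exact Nat.floor_le (by linarith)
    _ = 432 * exp (1 / 2) * exp (24 * exp (1 / 2)) * y := by ring
end
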